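/- The polynomial p(x) = x^4 - 4x^3 + 46x^2 - 148x + 1369 is irreducible over the rationals and its Galois group over ℚ is the dihedral group of order 8. -/

import Mathlib

open Polynomial

/-- The characteristic polynomial of Frobenius at 37 for the Jacobian of
`y² = x(x-1)(x+1)(x-1/7)(x+6/7)`. -/
noncomputable def pFrob37 : Polynomial ℚ :=
  X ^ 4 - 4 * X ^ 3 + 46 * X ^ 2 - 148 * X + C 1369

/-!
The roots of `X⁴ - aX³ + (b + 2q)X² - aqX + q²` come in pairs `{x, q / x}`, and `β = x + q / x` is
a root of `X² - aX + b`. So the splitting field is reached by adjoining first `β`, then a root `x`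
of `X² - βX + q`, then a root `y` of `X² - β'X + q`, where `β' = a - β` is the conjugate of `β`.
The last two quadratics have discriminants `δ = β² - 4q` and its conjugate `δ'`, whose product `n`
lies in the base field `K`. If `δ` or `δ'` were a square in `K(β)`, its norm `n` would be a square
in `K`; and if `δ'` became a square in `K(β, √δ)`, then `δ'` or `δδ' = n` would be a square in
`K(β)`, so `n` or `n(a² - 4b)` would be one in `K`. When neither is, and `a² - 4b` is no square
either, all three steps are genuinely quadratic: the quartic is irreducible, and its group, having
order 8, is a Sylow 2-subgroup of `S₄`.
-/

section Group

theorem nonempty_mulEquiv_of_injective_of_card_eq_pow {G H P : Type*} [Group G] [Group H] [Group P]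
    [Finite P] (p : ℕ) [Fact p.Prime] {f : G →* P} {g : H →* P}
    (hf : Function.Injective f) (hg : Function.Injective g)
    (hG : Nat.card G = p ^ (Nat.card P).factorization p)
    (hH : Nat.card H = p ^ (Nat.card P).factorization p) : Nonempty (G ≃* H) := by
  have card_f : Nat.card f.range = p ^ (Nat.card P).factorization p := by
    rw [← hG, Nat.card_congr (MonoidHom.ofInjective hf).toEquiv]
  have card_g : Nat.card g.range = p ^ (Nat.card P).factorization p := by
    rw [← hH, Nat.card_congr (MonoidHom.ofInjective hg).toEquiv]
  exact ⟨(MonoidHom.ofInjective hf).trans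
    ((Sylow.equiv (Sylow.ofCard _ card_f) (Sylow.ofCard _ card_g)).trans
      (MonoidHom.ofInjective hg).symm)⟩

/-- The action of the dihedral group on the vertices `ZMod n` of the regular `n`-gon: `r i` is the
rotation `x ↦ x + i` and, to match the multiplication of `DihedralGroup`, `sr i` is the reflection
`x ↦ -(x + i)`. -/
def dihedralToPerm (n : ℕ) : DihedralGroup n →* Equiv.Perm (ZMod n) where
  toFun
    | .r i => Equiv.addRight i
    | .sr i => (Equiv.addRight i).trans (Equiv.neg _)
  map_one' := by
    rw [DihedralGroup.one_def]
    ext x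
    simp
  map_mul' := by
    rintro (i | i) (j | j) <;> ext x <;> simp <;> ring

theorem dihedralToPerm_injective {n : ℕ} (h2 : (2 : ZMod n) ≠ 0) :
    Function.Injective (dihedralToPerm n) := by
  have rotation_ne_reflection (i j : ZMod n) :
      dihedralToPerm n (.r i) ≠ dihedralToPerm n (.sr j) := by
    intro h
    have at_zero : 0 + i = -(0 + j) := DFunLike.congr_fun h 0
    have at_one : 1 + i = -(1 + j) := DFunLike.congr_fun h 1
    exact h2 (by linear_combination at_one - at_zero)
  rintro (i | i) (j | j) h
  · have at_zero : 0 + i = 0 + j := DFunLike.congr_fun h 0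
    simpa using at_zero
  · exact absurd h (rotation_ne_reflection i j)
  · exact absurd h.symm (rotation_ne_reflection j i)
  · have at_zero : -(0 + i) = -(0 + j) := DFunLike.congr_fun h 0
    simpa using at_zero

theorem nonempty_gal_mulEquiv_dihedralGroup_four {F : Type*} [Field F] {p : F[X]}
    (hsep : p.Separable) (hdeg : p.natDegree = 4) (hcard : Nat.card p.Gal = 8) :
    Nonempty (p.Gal ≃* DihedralGroup 4) := by
  classical
  have hsplits : Fact ((p.map (algebraMap F p.SplittingField)).Splits) :=
    ⟨SplittingField.splits p⟩
  have card_roots : Fintype.card (p.rootSet p.SplittingField) = Fintype.card (ZMod 4) := by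
    rw [card_rootSet_eq_natDegree hsep hsplits.out, hdeg, ZMod.card]
  let e := (Fintype.equivOfCardEq card_roots).permCongrHom
  have card_sylow : 8 = 2 ^ (Nat.card (Equiv.Perm (ZMod 4))).factorization 2 := by
    rw [Nat.card_perm, Nat.card_zmod, show Nat.factorial 4 = 2 ^ 3 * 3 from rfl,
      Nat.factorization_mul (by norm_num) (by norm_num), Nat.prime_two.factorization_pow]
    simp [Nat.factorization_eq_zero_of_not_dvd]
  exact nonempty_mulEquiv_of_injective_of_card_eq_pow 2
    (f := e.toMonoidHom.comp (Gal.galActionHom p p.SplittingField))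
    (e.injective.comp (Gal.galActionHom_injective p p.SplittingField))
    (dihedralToPerm_injective (n := 4) (by decide))
    (hcard.trans card_sylow) (DihedralGroup.nat_card.trans card_sylow)

end Group

section QuadraticExtension

open QuadraticAlgebra

theorem sq_ne_of_not_isSquare_discrim {R : Type*} [CommRing R] {a b : R}
    (h : ¬ IsSquare (b ^ 2 + 4 * a)) (r : R) : r ^ 2 ≠ a + b * r := fun hr ↦
  h ⟨2 * r - b, by linear_combination -4 * hr⟩

theorem isSquare_or_isSquare_mul_discrim {K : Type*} [Field K] {a b c : K}
    (h : IsSquare (algebraMap K (QuadraticAlgebra K a b) c)) :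
    IsSquare c ∨ IsSquare (c * (b ^ 2 + 4 * a)) := by
  obtain ⟨⟨u, v⟩, huv⟩ := h
  have re_eq : c = u * u + a * v * v := congrArg QuadraticAlgebra.re huv
  have im_eq : 0 = u * v + v * u + b * v * v := congrArg QuadraticAlgebra.im huv
  by_cases hv : v = 0
  · exact .inl ⟨u, by rw [re_eq, hv]; ring⟩
  have hb : b * v = -(2 * u) :=
    mul_left_cancel₀ hv (by linear_combination -im_eq)
  right
  by_cases h2 : (2 : K) = 0
  · have b_eq : b = 0 := by simpa [h2, hv] using hb
    exact ⟨0, by linear_combination c * b * b_eq + 2 * c * a * h2⟩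
  · have four_mul : 4 * c = v ^ 2 * (b ^ 2 + 4 * a) := by
      linear_combination 4 * re_eq - (b * v - 2 * u) * hb
    refine ⟨v * (b ^ 2 + 4 * a) / 2, ?_⟩
    field_simp
    linear_combination (b ^ 2 + 4 * a) * four_mul

theorem omega_sq_eq_sub {R : Type*} [CommRing R] {a b : R} :
    (ω : QuadraticAlgebra R (-b) a) ^ 2 =
      algebraMap R _ a * ω - algebraMap R (QuadraticAlgebra R (-b) a) b := by
  rw [sq, omega_mul_omega_eq_algebraMap, map_neg]
  ring

theorem subalgebra_quadraticAlgebra_eq_top {K R : Type*} [CommRing K] [CommRing R] [Algebra K R]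
    {a b : R} {S : Subalgebra K (QuadraticAlgebra R a b)}
    (hR : S.comap (IsScalarTower.toAlgHom K R (QuadraticAlgebra R a b)) = ⊤) (hω : ω ∈ S) :
    S = ⊤ := by
  have base_mem (r : R) : algebraMap R (QuadraticAlgebra R a b) r ∈ S :=
    (hR ▸ Algebra.mem_top : r ∈ S.comap (IsScalarTower.toAlgHom K R (QuadraticAlgebra R a b)))
  refine eq_top_iff.2 fun z _ ↦ ?_
  rw [← z.mk_eta, mk_eq_add_smul_omega, Algebra.smul_def]
  exact S.add_mem (base_mem _) (S.mul_mem (base_mem _) hω)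

theorem irreducible_of_adjoin_root_eq_top {K L : Type*} [Field K] [Field L] [Algebra K L]
    {p : K[X]} {x : L} (hp : p.Monic) (hx : aeval x p = 0)
    (htop : IntermediateField.adjoin K {x} = ⊤) (hdeg : p.natDegree = Module.finrank K L) :
    Irreducible p := by
  have hint : IsIntegral K x := ⟨p, hp, hx⟩
  have natDegree_minpoly : (minpoly K x).natDegree = Module.finrank K L := by
    rw [← IntermediateField.adjoin.finrank hint, htop, IntermediateField.finrank_top']
  rw [eq_of_monic_of_dvd_of_natDegree_le (minpoly.monic hint) hp (minpoly.dvd K x hx)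
    (hdeg.trans natDegree_minpoly.symm).le]
  exact minpoly.irreducible hint

end QuadraticExtension

section WeilQuartic

open QuadraticAlgebra

section CommRing

variable {R : Type*} [CommRing R] (a b q : R)

/-- The product of `X² - βX + q` over the two roots `β` of `X² - aX + b`. The characteristic
polynomial of Frobenius on an abelian surface over `𝔽_q` has this shape. -/
noncomputable def weilQuartic : R[X] :=
  X ^ 4 - C a * X ^ 3 + C (b + 2 * q) * X ^ 2 - C (a * q) * X + C (q ^ 2)

theorem monic_weilQuartic : (weilQuartic a b q).Monic := by
  unfold weilQuartic
  monicity!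

theorem natDegree_weilQuartic [Nontrivial R] : (weilQuartic a b q).natDegree = 4 := by
  unfold weilQuartic
  compute_degree!

theorem map_weilQuartic_eq_mul {A : Type*} [CommRing A] [Algebra R A] {β : A}
    (hβ : β ^ 2 = algebraMap R A a * β - algebraMap R A b) :
    (weilQuartic a b q).map (algebraMap R A) =
      (X ^ 2 - C β * X + C (algebraMap R A q)) *
        (X ^ 2 - C (algebraMap R A a - β) * X + C (algebraMap R A q)) := by
  have hβX := congrArg C hβ
  simp only [weilQuartic, Polynomial.map_add, Polynomial.map_sub, Polynomial.map_mul,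
    Polynomial.map_pow, Polynomial.map_ofNat, map_X, map_C, map_add, map_sub, map_mul, map_pow,
    map_ofNat] at hβX ⊢
  linear_combination X ^ 2 * hβX

theorem quadratic_eq_X_sub_C_mul {q β x : R} (hx : x ^ 2 = β * x - q) :
    X ^ 2 - C β * X + C q = (X - C x) * (X - C (β - x)) := by
  have hxX := congrArg C hx
  simp only [map_sub, map_mul, map_pow] at hxX ⊢
  linear_combination hxX

/-- The algebra `R[β]` with `β² = aβ - b`, where `β = ω`. -/
abbrev TraceAlgebra : Type _ := QuadraticAlgebra R (-b) a

/-- The algebra `R[β, x]` with `x² = βx - q`, where `x = ω` is one root of `weilQuartic a b q`. -/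
abbrev RootAlgebra : Type _ := QuadraticAlgebra (TraceAlgebra a b) (-algebraMap R _ q) ω

variable {a b q}

theorem aeval_weilQuartic_eq_zero {A : Type*} [CommRing A] [Algebra R A] {β x : A}
    (hβ : β ^ 2 = algebraMap R A a * β - algebraMap R A b) (hx : x ^ 2 = β * x - algebraMap R A q) :
    aeval x (weilQuartic a b q) = 0 := by
  rw [aeval_def, eval₂_eq_eval_map, map_weilQuartic_eq_mul a b q hβ, quadratic_eq_X_sub_C_mul hx]
  simp

theorem splits_map_weilQuartic {A : Type*} [CommRing A] [Algebra R A] {β x y : A}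
    (hβ : β ^ 2 = algebraMap R A a * β - algebraMap R A b) (hx : x ^ 2 = β * x - algebraMap R A q)
    (hy : y ^ 2 = (algebraMap R A a - β) * y - algebraMap R A q) :
    ((weilQuartic a b q).map (algebraMap R A)).Splits := by
  rw [map_weilQuartic_eq_mul a b q hβ, quadratic_eq_X_sub_C_mul hx, quadratic_eq_X_sub_C_mul hy]
  exact ((Splits.X_sub_C _).mul (Splits.X_sub_C _)).mul ((Splits.X_sub_C _).mul (Splits.X_sub_C _))

theorem finrank_rootAlgebra [Nontrivial R] : Module.finrank R (RootAlgebra a b q) = 4 := by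
  rw [← Module.finrank_mul_finrank R (TraceAlgebra a b), finrank_eq_two, finrank_eq_two]

theorem norm_discrim :
    QuadraticAlgebra.norm ((ω : TraceAlgebra a b) ^ 2 + 4 * -algebraMap R _ q) =
      (b + 4 * q) ^ 2 - 4 * q * a ^ 2 := by
  simp only [sq, mul_neg, norm_def, re_add, re_mul, omega_re, mul_zero, omega_im, mul_one, zero_add,
    re_neg, re_ofNat, algebraMap_re, im_ofNat, algebraMap_im, add_zero, im_add, im_mul, im_neg,
    zero_mul, neg_zero, neg_mul, sub_neg_eq_add]
  ring

theorem norm_conj_discrim :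
    QuadraticAlgebra.norm
        ((algebraMap R _ a - (ω : TraceAlgebra a b)) ^ 2 + 4 * -algebraMap R _ q) =
      (b + 4 * q) ^ 2 - 4 * q * a ^ 2 := by
  simp only [sq, mul_neg, norm_def, re_add, re_mul, re_sub, algebraMap_re, omega_re, sub_zero,
    im_sub, algebraMap_im, omega_im, zero_sub, mul_one, neg_neg, re_neg, re_ofNat, im_ofNat,
    mul_zero, add_zero, im_add, im_mul, neg_mul, one_mul, neg_add_cancel_right, im_neg, zero_mul,
    neg_zero, sub_neg_eq_add]
  ring

theorem conj_discrim_mul_discrim :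
    ((algebraMap R _ a - (ω : TraceAlgebra a b)) ^ 2 + 4 * -algebraMap R _ q) *
        (ω ^ 2 + 4 * -algebraMap R _ q) =
      algebraMap R _ ((b + 4 * q) ^ 2 - 4 * q * a ^ 2) := by
  simp only [map_sub, map_mul, map_pow, map_add, map_ofNat]
  linear_combination (ω ^ 2 - algebraMap R _ a * ω - algebraMap R _ b - 8 * algebraMap R _ q) *
    omega_sq_eq_sub (a := a) (b := b)

theorem algebraMap_omega_sq {A : Type*} [CommRing A] [Algebra R A] [Algebra (TraceAlgebra a b) A]
    [IsScalarTower R (TraceAlgebra a b) A] :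
    algebraMap (TraceAlgebra a b) A ω ^ 2 =
      algebraMap R A a * algebraMap (TraceAlgebra a b) A ω - algebraMap R A b := by
  simp only [IsScalarTower.algebraMap_apply R (TraceAlgebra a b) A, ← map_pow, ← map_mul, ← map_sub,
    omega_sq_eq_sub]

theorem adjoin_rootAlgebra_eq_top :
    Algebra.adjoin R {algebraMap (TraceAlgebra a b) (RootAlgebra a b q) ω, ω} = ⊤ :=
  subalgebra_quadraticAlgebra_eq_top
    (subalgebra_quadraticAlgebra_eq_top (Algebra.eq_top_iff.2 fun r ↦ Subalgebra.algebraMap_mem _ r)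
      (Algebra.subset_adjoin (.inl rfl)))
    (Algebra.subset_adjoin (.inr rfl))

end CommRing

section Field

variable {K : Type*} [Field K] {a b q : K}

theorem fact_sq_ne_traceAlgebra (hd : ¬ IsSquare (a ^ 2 - 4 * b)) :
    Fact (∀ r : K, r ^ 2 ≠ -b + a * r) :=
  ⟨sq_ne_of_not_isSquare_discrim (by rwa [mul_neg, ← sub_eq_add_neg])⟩

theorem fact_sq_ne_rootAlgebra (hn : ¬ IsSquare ((b + 4 * q) ^ 2 - 4 * q * a ^ 2)) :
    Fact (∀ r : TraceAlgebra a b, r ^ 2 ≠ -algebraMap K _ q + ω * r) :=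
  ⟨sq_ne_of_not_isSquare_discrim fun h ↦ hn (norm_discrim (R := K) ▸ h.map QuadraticAlgebra.norm)⟩

theorem not_isSquare_conj_discrim (hd : ¬ IsSquare (a ^ 2 - 4 * b))
    (hn : ¬ IsSquare ((b + 4 * q) ^ 2 - 4 * q * a ^ 2))
    (hdn : ¬ IsSquare (((b + 4 * q) ^ 2 - 4 * q * a ^ 2) * (a ^ 2 - 4 * b))) :
    ¬ IsSquare (algebraMap (TraceAlgebra a b) (RootAlgebra a b q)
      ((algebraMap K _ a - ω) ^ 2 + 4 * -algebraMap K _ q)) := by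
  have := fact_sq_ne_traceAlgebra hd
  intro h
  rcases isSquare_or_isSquare_mul_discrim h with hδ' | hδδ'
  · exact hn (norm_conj_discrim (R := K) ▸ hδ'.map QuadraticAlgebra.norm)
  · rw [conj_discrim_mul_discrim] at hδδ'
    rcases isSquare_or_isSquare_mul_discrim hδδ' with h_n | h_nd
    · exact hn h_n
    · exact hdn (by rwa [mul_neg, ← sub_eq_add_neg] at h_nd)

section Extension

variable {E : Type*} [Field E] [Algebra K E] {β x : E}

theorem irreducible_weilQuartic_of_finrank (hq : q ≠ 0)
    (hβ : β ^ 2 = algebraMap K E a * β - algebraMap K E b) (hx : x ^ 2 = β * x - algebraMap K E q)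
    (htop : Algebra.adjoin K {β, x} = ⊤) (hE : Module.finrank K E = 4) :
    Irreducible (weilQuartic a b q) := by
  have hx0 : x ≠ 0 := by
    rintro rfl
    exact hq (by simpa using hx)
  have x_mem : x ∈ IntermediateField.adjoin K {x} := IntermediateField.mem_adjoin_simple_self K x
  have β_mem : β ∈ IntermediateField.adjoin K {x} := by
    have β_eq : β = (x ^ 2 + algebraMap K E q) / x := by
      field_simp
      linear_combination -hx
    rw [β_eq]
    exact div_mem (add_mem (pow_mem x_mem 2) (IntermediateField.algebraMap_mem _ q)) x_mem
  have adjoin_eq_top : IntermediateField.adjoin K {x} = ⊤ := by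
    refine IntermediateField.toSubalgebra_injective (eq_top_iff.2 (htop ▸ Algebra.adjoin_le ?_))
    rintro z (rfl | rfl)
    exacts [β_mem, x_mem]
  exact irreducible_of_adjoin_root_eq_top (monic_weilQuartic a b q)
    (aeval_weilQuartic_eq_zero hβ hx) adjoin_eq_top ((natDegree_weilQuartic a b q).trans hE.symm)

theorem isSplittingField_weilQuartic {y : E}
    (hβ : β ^ 2 = algebraMap K E a * β - algebraMap K E b) (hx : x ^ 2 = β * x - algebraMap K E q)
    (hy : y ^ 2 = (algebraMap K E a - β) * y - algebraMap K E q)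
    (htop : Algebra.adjoin K {β, x, y} = ⊤) : IsSplittingField K E (weilQuartic a b q) := by
  have hx' : (β - x) ^ 2 = β * (β - x) - algebraMap K E q := by linear_combination hx
  have hβ' : (algebraMap K E a - β) ^ 2 =
      algebraMap K E a * (algebraMap K E a - β) - algebraMap K E b := by linear_combination hβ
  have root_mem {z : E} (hz : aeval z (weilQuartic a b q) = 0) :
      z ∈ Algebra.adjoin K ((weilQuartic a b q).rootSet E) :=
    Algebra.subset_adjoin ((mem_rootSet_of_ne (monic_weilQuartic a b q).ne_zero).2 hz)
  have x_mem := root_mem (aeval_weilQuartic_eq_zero hβ hx)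
  have y_mem := root_mem (aeval_weilQuartic_eq_zero hβ' hy)
  have β_mem := add_mem x_mem (root_mem (aeval_weilQuartic_eq_zero hβ hx'))
  rw [add_sub_cancel] at β_mem
  refine ⟨splits_map_weilQuartic hβ hx hy, eq_top_iff.2 (htop ▸ Algebra.adjoin_le ?_)⟩
  rintro z (rfl | rfl | rfl)
  exacts [β_mem, x_mem, y_mem]

theorem finrank_splittingField_weilQuartic
    (hβ : β ^ 2 = algebraMap K E a * β - algebraMap K E b) (hx : x ^ 2 = β * x - algebraMap K E q)
    (htop : Algebra.adjoin K {β, x} = ⊤)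
    (hdisc : ¬ IsSquare ((algebraMap K E a - β) ^ 2 + 4 * -algebraMap K E q)) :
    Module.finrank K (weilQuartic a b q).SplittingField = Module.finrank K E * 2 := by
  let L := QuadraticAlgebra E (-algebraMap K E q) (algebraMap K E a - β)
  have : Fact (∀ r : E, r ^ 2 ≠ -algebraMap K E q + (algebraMap K E a - β) * r) :=
    ⟨sq_ne_of_not_isSquare_discrim hdisc⟩
  have : IsSplittingField K L (weilQuartic a b q) := by
    refine isSplittingField_weilQuartic (β := algebraMap E L β) (x := algebraMap E L x) (y := ω)
      ?_ ?_ ?_ ?_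
    · simpa [← IsScalarTower.algebraMap_apply] using congrArg (algebraMap E L) hβ
    · simpa [← IsScalarTower.algebraMap_apply] using congrArg (algebraMap E L) hx
    · rw [omega_sq_eq_sub, map_sub, ← IsScalarTower.algebraMap_apply,
        ← IsScalarTower.algebraMap_apply]
    · refine subalgebra_quadraticAlgebra_eq_top (eq_top_iff.2 (htop ▸ Algebra.adjoin_le ?_))
        (Algebra.subset_adjoin (by simp))
      rintro z (rfl | rfl)
      · exact Algebra.subset_adjoin (.inl rfl)
      · exact Algebra.subset_adjoin (.inr (.inl rfl))
  rw [← (IsSplittingField.algEquiv L (weilQuartic a b q)).toLinearEquiv.finrank_eq,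
    ← Module.finrank_mul_finrank K E L, finrank_eq_two]

end Extension

theorem separable_weilQuartic (hirr : Irreducible (weilQuartic a b q))
    (hn : ¬ IsSquare ((b + 4 * q) ^ 2 - 4 * q * a ^ 2)) : (weilQuartic a b q).Separable := by
  -- In characteristic 2, `(b + 4q)² - 4qa² = b²` is a square.
  have two_ne_zero : (2 : K) ≠ 0 := fun h2 ↦
    hn ⟨b, by linear_combination (4 * b * q + 8 * q ^ 2 - 2 * q * a ^ 2) * h2⟩
  refine (separable_iff_derivative_ne_zero hirr).2 fun hder ↦ ?_
  have coeff_four : (weilQuartic a b q).coeff 4 = 1 := by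
    rw [← natDegree_weilQuartic a b q]
    exact monic_weilQuartic a b q
  have coeff_three : (derivative (weilQuartic a b q)).coeff 3 = 2 * 2 := by
    rw [coeff_derivative, coeff_four]
    norm_num
  rw [hder, coeff_zero] at coeff_three
  exact mul_ne_zero two_ne_zero two_ne_zero coeff_three.symm

theorem irreducible_and_nonempty_gal_mulEquiv_weilQuartic (hd : ¬ IsSquare (a ^ 2 - 4 * b))
    (hn : ¬ IsSquare ((b + 4 * q) ^ 2 - 4 * q * a ^ 2))
    (hdn : ¬ IsSquare (((b + 4 * q) ^ 2 - 4 * q * a ^ 2) * (a ^ 2 - 4 * b))) :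
    Irreducible (weilQuartic a b q) ∧
      Nonempty ((weilQuartic a b q).Gal ≃* DihedralGroup 4) := by
  have := fact_sq_ne_traceAlgebra hd
  have := fact_sq_ne_rootAlgebra hn
  have hq : q ≠ 0 := by
    rintro rfl
    exact hn ⟨b, by ring⟩
  have hβ := algebraMap_omega_sq (a := a) (b := b) (A := RootAlgebra a b q)
  have hirr := irreducible_weilQuartic_of_finrank hq hβ omega_sq_eq_sub adjoin_rootAlgebra_eq_top
    finrank_rootAlgebra
  have hsep := separable_weilQuartic hirr hn
  refine ⟨hirr, nonempty_gal_mulEquiv_dihedralGroup_four hsep (natDegree_weilQuartic a b q) ?_⟩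
  have hdisc := not_isSquare_conj_discrim hd hn hdn
  simp only [map_add, map_sub, map_mul, map_pow, map_neg, map_ofNat,
    ← IsScalarTower.algebraMap_apply] at hdisc
  rw [Gal.card_of_separable hsep, finrank_splittingField_weilQuartic hβ omega_sq_eq_sub
    adjoin_rootAlgebra_eq_top hdisc, finrank_rootAlgebra]

end Field

end WeilQuartic

/-- `x⁴ - 4x³ + 46x² - 148x + 1369` is irreducible over `ℚ` and its Galois group
(the Galois group of its splitting field over `ℚ`) is dihedral of order 8. -/
theorem pFrob37_irreducible_and_gal_dihedral :
    Irreducible pFrob37 ∧ Nonempty (pFrob37.Gal ≃* DihedralGroup 4) := by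
  have pFrob37_eq : pFrob37 = weilQuartic 4 (-28) 37 := by
    norm_num [pFrob37, weilQuartic, C_ofNat]
  rw [pFrob37_eq]
  exact irreducible_and_nonempty_gal_mulEquiv_weilQuartic (by norm_num) (by norm_num) (by norm_num)
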